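/- L²-bound on the local corrector: let d, r ≥ 1 and λ ≥ 1, and let the jump rates {c_b}_{b∈(Z^d)^*} satisfy the standing hypothesis (locality of radius r, bounds 1 ≤ c_b ≤ λ, translation covariance c_{x,y} = τ_x c_{0,y−x}, and c_{x,y} independent of the coordinates (η_x, η_y)). Let ρ ∈ (0,1), m ∈ N, and 1 ≤ i ≤ d. Suppose v ∈ ℓ_{e_i,□_m^+} + F_0(□_m^−) attains the infimum defining ν̄(ρ, □_m, e_i), and set φ := v − ℓ_{e_i,□_m^+}, normalized so that E_ρ[φ] = 0. Then E_ρ[φ²] ≤ 16 λ χ(ρ) 3^{(d+2)m}. -/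

import Mathlib

/-!
Write `φ = v - ℓ`. Comparing `v` with the competitor `ℓ` and using `1 ≤ c ≤ λ` bounds the
Dirichlet energy `∑_b E[(π_b φ)²]` by `8λχ|□_m|` (`dirichlet_bound`), since
`E[(π_b ℓ)²]` is `2χ` on bonds in direction `e_i` and `0` on the others.

A Poincaré inequality with constant `2 · 3^{2m}` (`poincare`) then finishes the proof. By
Efron–Stein (`efron_stein`), `E[φ²] ≤ χ ∑_x E[(D_x φ)²]` over interior sites `x`. Since `φ`
ignores the coordinates outside `□_m^-`, every site `y ∉ □_m^-` satisfies
`χ E[(D_x φ)²] = ½ E[(π_{x,y} φ)²]` (`integral_kawasaki_sq`). Taking `y` on the line through `x`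
in direction `e_i`, the exchange of `x` and `y` is a product of nearest-neighbour exchanges,
each preserving the measure; Cauchy–Schwarz along the path (`path_bound`) and counting how
often each bond is used give the factor `3^{2m}`.

All functions involved depend on finitely many coordinates, so they are automatically
measurable and integrable.
-/


open MeasureTheory Filter
open scoped ENNReal NNReal

noncomputable section

abbrev Zd (d : ℕ) := Fin d → ℤ
abbrev Config (d : ℕ) := Zd d → Bool

def stdBasis (d : ℕ) (i : Fin d) : Zd d := fun j => if j = i then 1 else 0

def box (d : ℕ) (L : ℕ) : Finset (Zd d) :=
  Fintype.piFinset fun _ => Finset.Icc (-(L : ℤ)) (L : ℤ)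

/-- `P` is the product Bernoulli(ρ) measure on `X = {0,1}^{ℤ^d}`: it is a probability
measure under which the coordinates are i.i.d. Bernoulli(ρ). -/
def IsBernoulliProduct {d : ℕ} (ρ : ℝ) (P : Measure (Config d)) : Prop :=
  IsProbabilityMeasure P ∧
    ∀ (S : Finset (Zd d)) (b : Zd d → Bool),
      P {η | ∀ x ∈ S, η x = b x} = ∏ x ∈ S, ENNReal.ofReal (if b x then ρ else 1 - ρ)

/-- The configuration `η^{x,y}` with the occupation values at `x` and `y` exchanged. -/
def exchange {d : ℕ} (x y : Zd d) (η : Config d) : Config d :=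
  fun z => if z = x then η y else if z = y then η x else η z

/-- The Kawasaki operator `π_{x,y} F (η) = F (η^{x,y}) - F η`. -/
def kawasaki {d : ℕ} (x y : Zd d) (F : Config d → ℝ) (η : Config d) : ℝ :=
  F (exchange x y η) - F η

/-- `F` depends only on the coordinates in `Λ`. -/
def localOn {d : ℕ} (F : Config d → ℝ) (Λ : Finset (Zd d)) : Prop :=
  ∀ η η' : Config d, (∀ x ∈ Λ, η x = η' x) → F η = F η'

/-- The configuration agreeing with `η` off `Y`, and on `Y` equal to `1` on `S` and `0`
on `Y \ S`. -/
def setOn {d : ℕ} (Y S : Finset (Zd d)) (η : Config d) : Config d :=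
  fun z => if z ∈ Y then decide (z ∈ S) else η z

/-- The iterated Glauber derivative `D_Y F = ∏_{x ∈ Y} D_x F`, where
`D_x F (η) = F (η^x_+) - F (η^x_-)`; explicitly
`D_Y F (η) = ∑_{S ⊆ Y} (-1)^{|Y| - |S|} F (η with coordinates in S set to 1 and in Y∖S set to 0)`. -/
def glauber {d : ℕ} (Y : Finset (Zd d)) (F : Config d → ℝ) (η : Config d) : ℝ :=
  ∑ S ∈ Y.powerset, (-1 : ℝ) ^ (Y.card - S.card) * F (setOn Y S η)

/-- `η̄_Y = ∏_{x ∈ Y} (η_x - ρ)`. -/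
def etaBar {d : ℕ} (ρ : ℝ) (Y : Finset (Zd d)) (η : Config d) : ℝ :=
  ∏ x ∈ Y, ((if η x then (1 : ℝ) else 0) - ρ)

/-- `K_n`, the collection of `n`-element subsets of `ℤ^d`. -/
abbrev Kn (d n : ℕ) := {Y : Finset (Zd d) // Y.card = n}

/-- Translation: `τ_x F (η) = F (τ_x η)` with `(τ_x η) y = η (x + y)`. -/
def transl {d : ℕ} (x : Zd d) (F : Config d → ℝ) : Config d → ℝ :=
  fun η => F fun y => η (x + y)

/-- The regularization operator `R_L u = |Λ_L|⁻¹ ∑_{x ∈ Λ_L} τ_x u`. -/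
def regularize {d : ℕ} (L : ℕ) (u : Config d → ℝ) : Config d → ℝ :=
  fun η => ((box d L).card : ℝ)⁻¹ * ∑ x ∈ box d L, transl x u η

/-- For `f ∈ ℓ¹(K_n)` the chaos `I_n(f)(η) = ∑_{Y ∈ K_n} f(Y) η̄_Y(η)`, defined pointwise
(the series converges absolutely since `|η̄_Y| ≤ 1`). -/
def chaosFn {d n : ℕ} (ρ : ℝ) (f : Kn d n → ℝ) (η : Config d) : ℝ :=
  ∑' Y : Kn d n, f Y * etaBar ρ (Y : Finset (Zd d)) η

/-- The triadic cube `□_m = (-3^m/2, 3^m/2)^d ∩ ℤ^d = {-(3^m-1)/2, …, (3^m-1)/2}^d`. -/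
def cube (d m : ℕ) : Finset (Zd d) :=
  Fintype.piFinset fun _ => Finset.Icc (-(((3 : ℤ) ^ m - 1) / 2)) (((3 : ℤ) ^ m - 1) / 2)

/-- `□_m^-`, the interior: points of `□_m` all of whose nearest neighbors lie in `□_m`. -/
def cubeMinus (d m : ℕ) : Finset (Zd d) :=
  (cube d m).filter fun x =>
    ∀ i : Fin d, x + stdBasis d i ∈ cube d m ∧ x - stdBasis d i ∈ cube d m

/-- `□_m^+ = □_m ∪ ⋃_i (□_m + e_i)`. -/
def cubePlus (d m : ℕ) : Finset (Zd d) :=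
  cube d m ∪ Finset.univ.biUnion fun i : Fin d => (cube d m).image (· + stdBasis d i)

/-- The affine function `ℓ_{e_i,Λ}(η) = ∑_{x ∈ Λ} x_i η_x`. -/
def affine (d : ℕ) (i : Fin d) (Λ : Finset (Zd d)) (η : Config d) : ℝ :=
  ∑ x ∈ Λ, (x i : ℝ) * (if η x then 1 else 0)

/-- Standing hypotheses on the jump rates: a bond `{x, x+e_i}` is encoded by the pair
`(x, i)`. The rates are measurable, bounded between `1` and `λ`, local of radius `r`
around `x`, translation covariant, and independent of the two endpoint coordinates. -/
def JumpRatesHyp (d r : ℕ) (lam : ℝ) (c : Zd d → Fin d → Config d → ℝ) : Prop :=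
  (∀ x i, Measurable (c x i)) ∧
  (∀ x i η, 1 ≤ c x i η ∧ c x i η ≤ lam) ∧
  (∀ x i, localOn (c x i)
      (Fintype.piFinset fun j => Finset.Icc (x j - (r : ℤ)) (x j + (r : ℤ)))) ∧
  (∀ x i η, c x i η = c 0 i fun z => η (x + z)) ∧
  (∀ x i η b₁ b₂,
      c x i (Function.update (Function.update η x b₁) (x + stdBasis d i) b₂) = c x i η)

/-- The finite-volume energy of `w` on `□_m`,
`(2χ(ρ)|□_m|)⁻¹ ∑_{b ∈ overline{□_m^*}} E_ρ[½ c_b (π_b w)²]`, whose infimum over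
`w ∈ ℓ_{e_i,□_m^+} + F₀(□_m^-)` is `ν̄(ρ,□_m,e_i)`. -/
def energy (d m : ℕ) (ρ : ℝ) (P : Measure (Config d))
    (c : Zd d → Fin d → Config d → ℝ) (w : Config d → ℝ) : ℝ :=
  (2 * (ρ * (1 - ρ)) * ((cube d m).card : ℝ))⁻¹ *
    ∑ x ∈ cube d m, ∑ i : Fin d,
      ∫ η, (1 / 2) * c x i η * (kawasaki x (x + stdBasis d i) w η) ^ 2 ∂P

/-! ### Cylinders -/

lemma measurableSet_cylinder {d : ℕ} (S : Finset (Zd d)) (b : Zd d → Bool) :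
    MeasurableSet {η : Config d | ∀ x ∈ S, η x = b x} := by
  have : {η : Config d | ∀ x ∈ S, η x = b x} = ⋂ x ∈ S, {η | η x = b x} := by
    ext η
    simp
  rw [this]
  exact Finset.measurableSet_biInter S fun x _ =>
    measurableSet_eq_fun (measurable_pi_apply x) measurable_const

section

variable {d : ℕ}

/-- Two probability measures with the same cylinder probabilities coincide: nonempty
intersections of cylinders are cylinders, and cylinders generate the product σ-algebra. -/
lemma bernoulli_unique {ρ : ℝ} {P Q : Measure (Config d)}
    (hP : IsBernoulliProduct ρ P) (hQ : IsBernoulliProduct ρ Q) : P = Q := by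
  have := hP.1
  have := hQ.1
  let C : Set (Set (Config d)) :=
    {A | ∃ (S : Finset (Zd d)) (b : Zd d → Bool), A = {η | ∀ x ∈ S, η x = b x}}
  have hgen : (MeasurableSpace.pi : MeasurableSpace (Config d)) =
      MeasurableSpace.generateFrom C := by
    apply le_antisymm
    · refine iSup_le fun x => ?_
      rw [← measurable_iff_comap_le]
      refine @measurable_to_bool _ (MeasurableSpace.generateFrom C) _ ?_
      refine MeasurableSpace.measurableSet_generateFrom ⟨{x}, fun _ => true, ?_⟩
      ext η
      simp
    · refine MeasurableSpace.generateFrom_le ?_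
      rintro _ ⟨S, b, rfl⟩
      exact measurableSet_cylinder S b
  refine ext_of_generate_finite C hgen ?_ ?_ (by simp)
  · rintro _ ⟨S, b, rfl⟩ _ ⟨T, b', rfl⟩ ⟨η₀, h1, h2⟩
    refine ⟨S ∪ T, η₀, ?_⟩
    ext η
    simp only [Set.mem_inter_iff, Set.mem_ofPred_eq, Finset.mem_union] at *
    constructor
    · rintro ⟨h3, h4⟩ x (hx | hx)
      · rw [h3 x hx, h1 x hx]
      · rw [h4 x hx, h2 x hx]
    · intro h
      exact ⟨fun x hx => by rw [h x (Or.inl hx), h1 x hx],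
        fun x hx => by rw [h x (Or.inr hx), h2 x hx]⟩
  · rintro _ ⟨S, b, rfl⟩
    rw [hP.2, hQ.2]

/-! ### Local functions -/

/-- `F` depends on finitely many coordinates. -/
def Loc (F : Config d → ℝ) : Prop := ∃ Λ, localOn F Λ

lemma Loc.map₂ {F G : Config d → ℝ} (hF : Loc F) (hG : Loc G) (f : ℝ → ℝ → ℝ) :
    Loc (fun η => f (F η) (G η)) := by
  obtain ⟨Λ, hF⟩ := hF
  obtain ⟨Λ', hG⟩ := hG
  refine ⟨Λ ∪ Λ', fun η η' h => ?_⟩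
  simp only
  rw [hF η η' fun x hx => h x (Finset.mem_union_left _ hx),
    hG η η' fun x hx => h x (Finset.mem_union_right _ hx)]

lemma Loc.map {F : Config d → ℝ} (hF : Loc F) (f : ℝ → ℝ) : Loc (fun η => f (F η)) :=
  hF.map₂ hF fun a _ => f a

lemma localOn_update {F : Config d → ℝ} {Λ : Finset (Zd d)} (hF : localOn F Λ)
    (x : Zd d) (b : Bool) : localOn (fun η => F (Function.update η x b)) (Λ.erase x) := by
  intro η η' h
  refine hF _ _ fun y hy => ?_
  by_cases hyx : y = x
  · subst hyx
    simp
  · simp [hyx, h y (Finset.mem_erase.2 ⟨hyx, hy⟩)]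

lemma Loc.update {F : Config d → ℝ} (hF : Loc F) (x : Zd d) (b : Bool) :
    Loc (fun η => F (Function.update η x b)) :=
  hF.imp' _ fun _ h => localOn_update h x b

lemma Loc.exchange {F : Config d → ℝ} (hF : Loc F) (x y : Zd d) :
    Loc (fun η => F (exchange x y η)) := by
  obtain ⟨Λ, hF⟩ := hF
  refine ⟨insert x (insert y Λ), fun η η' h => hF _ _ fun z hz => ?_⟩
  unfold _root_.exchange
  split_ifs <;> apply h <;> simp [hz]

lemma Loc.kawasaki {F : Config d → ℝ} (hF : Loc F) (x y : Zd d) : Loc (kawasaki x y F) :=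
  (hF.exchange x y).map₂ hF fun a b => a - b

/-- A local function factors through a finite set of configurations. -/
lemma Loc.factor {F : Config d → ℝ} (hF : Loc F) :
    ∃ (Λ : Finset (Zd d)) (g : (Λ → Bool) → ℝ), F = fun η => g fun x => η x := by
  obtain ⟨Λ, hF⟩ := hF
  refine ⟨Λ, fun b => F fun z => if h : z ∈ Λ then b ⟨z, h⟩ else false, ?_⟩
  ext η
  exact hF _ _ fun x hx => by simp [hx]

lemma Loc.measurable {F : Config d → ℝ} (hF : Loc F) : Measurable F := by
  obtain ⟨Λ, g, rfl⟩ := hF.factor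
  exact (measurable_of_finite g).comp (measurable_pi_lambda _ fun x => measurable_pi_apply _)

lemma Loc.integrable {F : Config d → ℝ} (hF : Loc F) (P : Measure (Config d))
    [IsFiniteMeasure P] : Integrable F P := by
  have hm := hF.measurable
  obtain ⟨Λ, g, rfl⟩ := hF.factor
  refine Integrable.of_bound hm.aestronglyMeasurable (∑ b, ‖g b‖) (ae_of_all _ fun η => ?_)
  exact Finset.single_le_sum (f := fun b => ‖g b‖) (fun b _ => norm_nonneg _)
    (Finset.mem_univ _)

lemma Loc.affine (i : Fin d) (Λ : Finset (Zd d)) : Loc (affine d i Λ) := by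
  refine ⟨Λ, fun η η' h => Finset.sum_congr rfl fun x hx => ?_⟩
  rw [h x hx]

/-! ### Symmetries of the product Bernoulli measure -/

lemma exchange_eq_swap (x y : Zd d) (η : Config d) :
    exchange x y η = fun z => η (Equiv.swap x y z) := by
  ext z
  simp only [exchange, Equiv.swap_apply_def]
  split_ifs <;> rfl

lemma measurable_exchange (x y : Zd d) : Measurable (exchange x y : Config d → Config d) := by
  refine measurable_pi_lambda _ fun z => ?_
  simp only [exchange_eq_swap]
  exact measurable_pi_apply _

lemma measurable_upd (x : Zd d) (b : Bool) :
    Measurable (fun η : Config d => Function.update η x b) :=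
  measurable_update_left

lemma map_exchange {ρ : ℝ} {P : Measure (Config d)} (hP : IsBernoulliProduct ρ P)
    (x y : Zd d) : P.map (exchange x y) = P := by
  have := hP.1
  refine bernoulli_unique ⟨Measure.isProbabilityMeasure_map
    (measurable_exchange x y).aemeasurable, fun S b => ?_⟩ hP
  have hms := measurableSet_cylinder S b
  rw [Measure.map_apply (measurable_exchange x y) hms]
  have h := hP.2 (S.map (Equiv.swap x y).toEmbedding) fun z => b (Equiv.swap x y z)
  simp only [Finset.prod_map, Equiv.coe_toEmbedding, Equiv.swap_apply_self] at h
  rw [← h]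
  congr 1
  ext η
  simp only [Set.preimage_ofPred_eq, exchange_eq_swap, Set.mem_ofPred_eq, Finset.mem_map_equiv,
    Equiv.symm_swap]
  constructor
  · intro h z hz
    simpa using h _ hz
  · intro h z hz
    simpa using h (Equiv.swap x y z) (by simpa using hz)

lemma integral_exchange {ρ : ℝ} {P : Measure (Config d)} (hP : IsBernoulliProduct ρ P)
    {F : Config d → ℝ} (hF : Loc F) (x y : Zd d) :
    ∫ η, F (exchange x y η) ∂P = ∫ η, F η ∂P := by
  conv_rhs => rw [← map_exchange hP x y]
  rw [integral_map (measurable_exchange x y).aemeasurable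
    hF.measurable.aestronglyMeasurable]

/-- Average of `F` over the coordinate at `x`, resampled as Bernoulli(`ρ`); this is the
conditional expectation given the coordinates other than `x`. -/
def resample (ρ : ℝ) (x : Zd d) (F : Config d → ℝ) (η : Config d) : ℝ :=
  ρ * F (Function.update η x true) + (1 - ρ) * F (Function.update η x false)

/-- The one-site Glauber derivative `D_x F`. -/
def siteDiff (x : Zd d) (F : Config d → ℝ) (η : Config d) : ℝ :=
  F (Function.update η x true) - F (Function.update η x false)

lemma Loc.resample {F : Config d → ℝ} (hF : Loc F) (ρ : ℝ) (x : Zd d) :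
    Loc (resample ρ x F) :=
  (hF.update x true).map₂ (hF.update x false) fun a b => ρ * a + (1 - ρ) * b

lemma Loc.siteDiff {F : Config d → ℝ} (hF : Loc F) (x : Zd d) : Loc (siteDiff x F) :=
  (hF.update x true).map₂ (hF.update x false) fun a b => a - b

/-- Resampling one coordinate leaves the measure invariant. -/
lemma mix_update {ρ : ℝ} (hρ : ρ ∈ Set.Ioo (0 : ℝ) 1) {P : Measure (Config d)}
    (hP : IsBernoulliProduct ρ P) (x : Zd d) :
    ENNReal.ofReal ρ • P.map (fun η => Function.update η x true) +
      ENNReal.ofReal (1 - ρ) • P.map (fun η => Function.update η x false) = P := by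
  have := hP.1
  have hsum : ENNReal.ofReal ρ + ENNReal.ofReal (1 - ρ) = 1 := by
    rw [← ENNReal.ofReal_add hρ.1.le (by linarith [hρ.2])]
    simp
  refine bernoulli_unique ⟨⟨?_⟩, fun S b => ?_⟩ hP
  · simp only [Measure.coe_add, Measure.coe_smul, Pi.add_apply, Pi.smul_apply, smul_eq_mul]
    rw [Measure.map_apply (measurable_upd x _) MeasurableSet.univ,
      Measure.map_apply (measurable_upd x _) MeasurableSet.univ]
    simp [hsum]
  have hms := measurableSet_cylinder S b
  simp only [Measure.coe_add, Measure.coe_smul, Pi.add_apply, Pi.smul_apply, smul_eq_mul]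
  rw [Measure.map_apply (measurable_upd x _) hms, Measure.map_apply (measurable_upd x _) hms]
  by_cases hx : x ∈ S
  · have key : ∀ a : Bool, P ((fun η => Function.update η x a) ⁻¹'
        {η : Config d | ∀ z ∈ S, η z = b z}) =
        if a = b x then
          ∏ z ∈ S.erase x, ENNReal.ofReal (if b z then ρ else 1 - ρ) else 0 := by
      intro a
      split_ifs with ha
      · rw [← hP.2]
        congr 1
        ext η
        simp only [Set.mem_preimage, Set.mem_ofPred_eq, Finset.mem_erase]
        constructor
        · rintro h z ⟨hz, hzS⟩
          simpa [hz] using h z hzS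
        · intro h z hzS
          by_cases hz : z = x
          · subst hz
            simpa using ha
          · simpa [hz] using h z ⟨hz, hzS⟩
      · convert measure_empty (μ := P)
        ext η
        simp only [Set.mem_preimage, Set.mem_ofPred_eq, Set.mem_empty_iff_false, iff_false]
        intro h
        exact ha (by simpa using h x hx)
    rw [key, key, ← Finset.mul_prod_erase S _ hx]
    cases hb : b x <;> simp
  · have key : ∀ a : Bool, (fun η => Function.update η x a) ⁻¹'
        {η : Config d | ∀ z ∈ S, η z = b z} = {η : Config d | ∀ z ∈ S, η z = b z} := by
      intro a
      ext η
      simp only [Set.mem_preimage, Set.mem_ofPred_eq]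
      refine forall₂_congr fun z hz => ?_
      rw [Function.update_of_ne]
      rintro rfl
      exact hx hz
    rw [key, key, ← add_mul, hsum, one_mul, hP.2]

lemma integral_resample {ρ : ℝ} (hρ : ρ ∈ Set.Ioo (0 : ℝ) 1) {P : Measure (Config d)}
    (hP : IsBernoulliProduct ρ P) {F : Config d → ℝ} (hF : Loc F) (x : Zd d) :
    ∫ η, resample ρ x F η ∂P = ∫ η, F η ∂P := by
  have := hP.1
  have h1 : 0 ≤ 1 - ρ := by linarith [hρ.2]
  have : ∀ b, IsProbabilityMeasure (P.map (fun η => Function.update η x b)) := fun b =>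
    Measure.isProbabilityMeasure_map (measurable_upd x b).aemeasurable
  conv_rhs => rw [← mix_update hρ hP x]
  rw [integral_add_measure ((hF.integrable _).smul_measure ENNReal.ofReal_ne_top)
      ((hF.integrable _).smul_measure ENNReal.ofReal_ne_top),
    integral_smul_measure, integral_smul_measure,
    integral_map (measurable_upd x _).aemeasurable hF.measurable.aestronglyMeasurable,
    integral_map (measurable_upd x _).aemeasurable hF.measurable.aestronglyMeasurable,
    ENNReal.toReal_ofReal hρ.1.le, ENNReal.toReal_ofReal h1]
  unfold resample
  rw [integral_add (((hF.update x true).integrable P).const_mul _)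
    (((hF.update x false).integrable P).const_mul _), integral_const_mul, integral_const_mul]
  rfl

/-! ### Variance bounds -/

/-- Efron–Stein inequality. Averaging out one coordinate `a` splits `E[F²]` exactly into
`E[(A_a F)²] + χ E[(D_a F)²]`, and `A_a` contracts the remaining derivatives by convexity. -/
lemma efron_stein {ρ : ℝ} (hρ : ρ ∈ Set.Ioo (0 : ℝ) 1) {P : Measure (Config d)}
    (hP : IsBernoulliProduct ρ P) (S : Finset (Zd d)) :
    ∀ F : Config d → ℝ, localOn F S →
      ∫ η, F η ^ 2 ∂P ≤
        (∫ η, F η ∂P) ^ 2 + ρ * (1 - ρ) * ∑ x ∈ S, ∫ η, siteDiff x F η ^ 2 ∂P := by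
  have := hP.1
  have h0 : 0 < ρ := hρ.1
  have h1 : 0 < 1 - ρ := by linarith [hρ.2]
  induction S using Finset.induction_on with
  | empty =>
    intro F hF
    have : F = fun _ => F fun _ => false := by
      ext η
      exact hF _ _ (by simp)
    rw [this]
    simp
  | insert a S ha ih =>
    intro F hF
    have hFL : Loc F := ⟨_, hF⟩
    have hG : localOn (resample ρ a F) S := by
      intro η η' h
      have hS : (insert a S).erase a = S := Finset.erase_insert ha
      have h2 := fun b => localOn_update hF a b η η' (by rwa [hS])
      simp only at h2
      simp only [resample, h2]
    have hsplit : ∫ η, F η ^ 2 ∂P = ∫ η, resample ρ a F η ^ 2 ∂P +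
        ρ * (1 - ρ) * ∫ η, siteDiff a F η ^ 2 ∂P := by
      rw [← integral_resample hρ hP (hFL.map (· ^ 2)) a, ← integral_const_mul,
        ← integral_add (((hFL.resample ρ a).map (· ^ 2)).integrable P)
          ((((hFL.siteDiff a).map (· ^ 2)).integrable P).const_mul _)]
      congr 1
      ext η
      simp only [resample, siteDiff]
      ring
    have hcontr : ∀ x ∈ S, ∫ η, siteDiff x (resample ρ a F) η ^ 2 ∂P ≤
        ∫ η, siteDiff x F η ^ 2 ∂P := by
      intro x hx
      have hxa : x ≠ a := by
        rintro rfl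
        exact ha hx
      rw [← integral_resample hρ hP ((hFL.siteDiff x).map (· ^ 2)) a]
      refine integral_mono ((((hFL.resample ρ a).siteDiff x).map (· ^ 2)).integrable P)
        ((((hFL.siteDiff x).map (· ^ 2)).resample ρ a).integrable P) fun η => ?_
      simp only [resample, siteDiff, Function.update_comm hxa.symm]
      nlinarith [mul_nonneg (mul_nonneg h0.le h1.le)
        (sq_nonneg ((F (Function.update (Function.update η x true) a true) -
          F (Function.update (Function.update η x false) a true)) -
          (F (Function.update (Function.update η x true) a false) -
          F (Function.update (Function.update η x false) a false))))]
    have h2 := ih _ hG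
    rw [integral_resample hρ hP hFL a] at h2
    rw [hsplit, Finset.sum_insert ha]
    have h3 := mul_le_mul_of_nonneg_left (Finset.sum_le_sum hcontr) (mul_pos h0 h1).le
    linarith

/-- If `F` does not see the site `y`, exchanging `x` with `y` resamples the coordinate
at `x` by an independent copy. -/
lemma integral_kawasaki_sq {ρ : ℝ} (hρ : ρ ∈ Set.Ioo (0 : ℝ) 1) {P : Measure (Config d)}
    (hP : IsBernoulliProduct ρ P) {F : Config d → ℝ} {Λ : Finset (Zd d)} (hF : localOn F Λ)
    {x y : Zd d} (hxy : x ≠ y) (hy : y ∉ Λ) :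
    ∫ η, kawasaki x y F η ^ 2 ∂P = 2 * (ρ * (1 - ρ)) * ∫ η, siteDiff x F η ^ 2 ∂P := by
  have := hP.1
  have hFL : Loc F := ⟨_, hF⟩
  have hL := (hFL.kawasaki x y).map (· ^ 2)
  rw [← integral_resample hρ hP hL x, ← integral_resample hρ hP (hL.resample ρ x) y,
    ← integral_const_mul]
  congr 1
  ext η
  have e1 : ∀ a b, F (exchange x y (Function.update (Function.update η y b) x a)) =
      F (Function.update η x b) := by
    intro a b
    refine hF _ _ fun z hz => ?_
    have hzy : z ≠ y := by
      rintro rfl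
      exact hy hz
    by_cases hzx : z = x
    · subst hzx
      simp [exchange, hxy.symm]
    · simp [exchange, hzx, hzy]
  have e2 : ∀ a b, F (Function.update (Function.update η y b) x a) =
      F (Function.update η x a) := by
    intro a b
    refine hF _ _ fun z hz => ?_
    have hzy : z ≠ y := by
      rintro rfl
      exact hy hz
    by_cases hzx : z = x
    · subst hzx
      simp
    · simp [hzx, hzy]
  simp only [resample, siteDiff, kawasaki, e1, e2]
  ring

/-! ### Moving a particle along a line -/

lemma stdBasis_self (i : Fin d) : stdBasis d i i = 1 := by simp [stdBasis]

lemma add_smul_ne (x : Zd d) (i : Fin d) {k l : ℕ} (h : k ≠ l) :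
    x + (k : ℤ) • stdBasis d i ≠ x + (l : ℤ) • stdBasis d i := by
  intro he
  have := congrFun he i
  simp [stdBasis_self] at this
  exact h this

lemma exchange_conj {x y z : Zd d} (hxy : x ≠ y) (hxz : x ≠ z) (hyz : y ≠ z) (η : Config d) :
    exchange x z η = exchange y z (exchange x y (exchange y z η)) := by
  ext w
  simp only [exchange]
  split_ifs <;> simp_all

/-- The long exchange `x ↔ x + L e_i` costs at most `4L` times the sum of the
nearest-neighbour exchanges along the segment. The conjugation identity
`(x z) = (y z)(x y)(y z)` extends the segment by one site, and the weights `1 + 1/L` and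
`1 + L` in the square of the sum reproduce the constant. -/
lemma path_bound {ρ : ℝ} {P : Measure (Config d)}
    (hP : IsBernoulliProduct ρ P) {F : Config d → ℝ} (hF : Loc F) (x : Zd d) (i : Fin d)
    (L : ℕ) (hL : 1 ≤ L) :
    ∫ η, kawasaki x (x + (L : ℤ) • stdBasis d i) F η ^ 2 ∂P ≤
      4 * L * ∑ k ∈ Finset.range L, ∫ η, kawasaki (x + (k : ℤ) • stdBasis d i)
        (x + (k : ℤ) • stdBasis d i + stdBasis d i) F η ^ 2 ∂P := by
  have := hP.1
  induction L, hL using Nat.le_induction with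
  | base =>
    have : 0 ≤ ∫ η, kawasaki x (x + stdBasis d i) F η ^ 2 ∂P :=
      integral_nonneg fun η => sq_nonneg _
    simp
    linarith
  | succ L hL ih =>
    set y := x + (L : ℤ) • stdBasis d i with hy
    set z := x + ((L + 1 : ℕ) : ℤ) • stdBasis d i with hz
    have hyz' : y + stdBasis d i = z := by
      rw [hy, hz]
      push_cast
      rw [add_smul, one_smul, add_assoc]
    have hxy : x ≠ y := by
      simpa [hy] using add_smul_ne x i (k := 0) (l := L) (by omega)
    have hxz : x ≠ z := by
      simpa [hz] using add_smul_ne x i (k := 0) (l := L + 1) (by omega)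
    have hyz : y ≠ z := add_smul_ne x i (by omega)
    rw [Finset.sum_range_succ, ← hy, hyz']
    have hL0 : (0 : ℝ) < L := by exact_mod_cast hL
    have hU := (hF.kawasaki x y).map (· ^ 2)
    have hV := (hF.kawasaki y z).map (· ^ 2)
    have hU' : Loc (fun η => kawasaki x y F (exchange y z η) ^ 2) := hU.exchange y z
    have hV' : Loc (fun η => kawasaki y z F (exchange x y (exchange y z η)) ^ 2) :=
      (hV.exchange x y).exchange y z
    have iU : ∫ η, kawasaki x y F (exchange y z η) ^ 2 ∂P =
        ∫ η, kawasaki x y F η ^ 2 ∂P := integral_exchange hP hU y z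
    have iV : ∫ η, kawasaki y z F (exchange x y (exchange y z η)) ^ 2 ∂P =
        ∫ η, kawasaki y z F η ^ 2 ∂P :=
      (integral_exchange hP (hV.exchange x y) y z).trans (integral_exchange hP hV x y)
    have hpt : ∀ η, L * kawasaki x z F η ^ 2 ≤
        (L + 1) * kawasaki x y F (exchange y z η) ^ 2 +
        (2 * L * (L + 1) * kawasaki y z F (exchange x y (exchange y z η)) ^ 2 +
          2 * L * (L + 1) * kawasaki y z F η ^ 2) := by
      intro η
      have hsum : kawasaki x z F η = kawasaki x y F (exchange y z η) +
          (kawasaki y z F (exchange x y (exchange y z η)) + kawasaki y z F η) := by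
        simp only [kawasaki]
        rw [exchange_conj hxy hxz hyz η]
        ring
      rw [hsum]
      generalize kawasaki x y F (exchange y z η) = u
      generalize kawasaki y z F (exchange x y (exchange y z η)) = s
      generalize kawasaki y z F η = t
      -- The difference of the two sides is `(u - L(s+t))² + L(L+1)(s-t)²`.
      have p1 := sq_nonneg (u - L * (s + t))
      have p2 : 0 ≤ (L : ℝ) * (L + 1) * (s - t) ^ 2 := by positivity
      nlinarith
    have hint : L * ∫ η, kawasaki x z F η ^ 2 ∂P ≤
        (L + 1) * ∫ η, kawasaki x y F η ^ 2 ∂P +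
        (2 * L * (L + 1) * ∫ η, kawasaki y z F η ^ 2 ∂P +
          2 * L * (L + 1) * ∫ η, kawasaki y z F η ^ 2 ∂P) := by
      have hU'' := (hU'.integrable P).const_mul ((L : ℝ) + 1)
      have hV'' := (hV'.integrable P).const_mul (2 * (L : ℝ) * (L + 1))
      have hW'' := (hV.integrable P).const_mul (2 * (L : ℝ) * (L + 1))
      have h := integral_mono ((((hF.kawasaki x z).map (· ^ 2)).integrable P).const_mul (L : ℝ))
        (hU''.add (hV''.add hW'')) hpt
      rw [integral_add' hU'' (hV''.add hW''), integral_add' hV'' hW''] at h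
      simp only [integral_const_mul] at h
      rwa [iU, iV] at h
    have h5 := mul_le_mul_of_nonneg_left ih (by positivity : (0 : ℝ) ≤ L + 1)
    refine le_of_mul_le_mul_left ?_ hL0
    push_cast
    nlinarith

/-! ### The triadic cube -/

lemma half_side (m : ℕ) : (2 : ℤ) * (((3 : ℤ) ^ m - 1) / 2) + 1 = 3 ^ m := by
  have : Odd ((3 : ℤ) ^ m) := Odd.pow (by decide)
  obtain ⟨k, hk⟩ := this
  omega

lemma card_cube (m : ℕ) : (cube d m).card = 3 ^ (d * m) := by
  have h := half_side m
  have h3 : (((3 : ℤ) ^ m - 1) / 2 + 1 - -(((3 : ℤ) ^ m - 1) / 2)).toNat = 3 ^ m := by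
    have : ((3 ^ m : ℕ) : ℤ) = 3 ^ m := by push_cast; rfl
    have h0 : (0 : ℤ) < 3 ^ m := by positivity
    omega
  rw [cube, Fintype.card_piFinset]
  simp only [Int.card_Icc, h3, Finset.prod_const, Finset.card_univ, Fintype.card_fin]
  rw [← pow_mul, mul_comm]

lemma mem_cube {m : ℕ} {x : Zd d} : x ∈ cube d m ↔
    ∀ j, -(((3 : ℤ) ^ m - 1) / 2) ≤ x j ∧ x j ≤ ((3 : ℤ) ^ m - 1) / 2 := by
  simp [cube, Fintype.mem_piFinset]

lemma line_mem {m : ℕ} {x : Zd d} (hx : x ∈ cube d m) (i : Fin d) (k : ℕ)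
    (hk : (k : ℤ) ≤ ((3 : ℤ) ^ m - 1) / 2 - x i) : x + (k : ℤ) • stdBasis d i ∈ cube d m := by
  rw [mem_cube] at *
  intro j
  have := hx j
  by_cases hj : j = i
  · subst hj
    have e : (x + (k : ℤ) • stdBasis d j) j = x j + k := by simp [stdBasis]
    rw [e]
    constructor <;> omega
  · simpa [stdBasis, hj] using this

/-- Every interior site reaches, along `e_i` and inside the cube, a site of the cube that
is not interior. -/
lemma exists_exit {m : ℕ} {x : Zd d} (hx : x ∈ cubeMinus d m) (i : Fin d) :
    ∃ L : ℕ, 1 ≤ L ∧ L ≤ 3 ^ m ∧ x + (L : ℤ) • stdBasis d i ∉ cubeMinus d m ∧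
      ∀ k < L, x + (k : ℤ) • stdBasis d i ∈ cube d m := by
  simp only [cubeMinus, Finset.mem_filter] at hx
  obtain ⟨hxc, hn⟩ := hx
  have h1 := (mem_cube.1 (hn i).1) i
  have h2 := (mem_cube.1 hxc) i
  simp only [Pi.add_apply, stdBasis_self] at h1
  have h3 := half_side m
  have h4 : ((3 ^ m : ℕ) : ℤ) = 3 ^ m := by push_cast; rfl
  refine ⟨(((3 : ℤ) ^ m - 1) / 2 - x i).toNat, by omega, by omega, ?_, fun k hk =>
    line_mem hxc i k (by omega)⟩
  simp only [cubeMinus, Finset.mem_filter, not_and]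
  intro _ h
  have := (mem_cube.1 (h i).1) i
  simp [stdBasis_self] at this
  omega

/-- Poincaré inequality on the cube for functions of the interior coordinates. Sites outside
`□_m^-` act as a reservoir, so no canonical conservation law obstructs it. -/
lemma poincare {ρ : ℝ} (hρ : ρ ∈ Set.Ioo (0 : ℝ) 1) {P : Measure (Config d)}
    (hP : IsBernoulliProduct ρ P) (m : ℕ) (i : Fin d) {F : Config d → ℝ}
    (hF : localOn F (cubeMinus d m)) (h0 : ∫ η, F η ∂P = 0) :
    ∫ η, F η ^ 2 ∂P ≤ 2 * (3 ^ m) ^ 2 *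
      ∑ x ∈ cube d m, ∫ η, kawasaki x (x + stdBasis d i) F η ^ 2 ∂P := by
  have hFL : Loc F := ⟨_, hF⟩
  set g : Zd d → ℝ := fun x => ∫ η, kawasaki x (x + stdBasis d i) F η ^ 2 ∂P with hg
  have g0 : ∀ x, 0 ≤ g x := fun x => integral_nonneg fun η => sq_nonneg _
  have hES := efron_stein hρ hP _ F hF
  rw [h0, Finset.mul_sum] at hES
  -- Bonds outside the cube are given weight `0`, so that the range of `k` no longer depends on `x`.
  have hsite : ∀ x ∈ cubeMinus d m, ρ * (1 - ρ) * ∫ η, siteDiff x F η ^ 2 ∂P ≤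
      2 * 3 ^ m * ∑ k ∈ Finset.range (3 ^ m),
        if x + (k : ℤ) • stdBasis d i ∈ cube d m then g (x + (k : ℤ) • stdBasis d i) else 0 := by
    intro x hx
    obtain ⟨L, hL1, hL2, hout, hin⟩ := exists_exit hx i
    have hne : x ≠ x + (L : ℤ) • stdBasis d i := by
      simpa using add_smul_ne x i (k := 0) (l := L) (by omega)
    have hp := path_bound hP hFL x i L hL1
    rw [integral_kawasaki_sq hρ hP hF hne hout] at hp
    have hs : ∑ k ∈ Finset.range L, g (x + (k : ℤ) • stdBasis d i) ≤
        ∑ k ∈ Finset.range (3 ^ m),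
        if x + (k : ℤ) • stdBasis d i ∈ cube d m then g (x + (k : ℤ) • stdBasis d i) else 0 := by
      calc _ = ∑ k ∈ Finset.range L, if x + (k : ℤ) • stdBasis d i ∈ cube d m then
            g (x + (k : ℤ) • stdBasis d i) else 0 :=
            Finset.sum_congr rfl fun k hk => by rw [if_pos (hin k (Finset.mem_range.1 hk))]
        _ ≤ _ := Finset.sum_le_sum_of_subset_of_nonneg (Finset.range_mono hL2)
            fun k _ _ => by split_ifs <;> simp [g0]
    have hL3 : (L : ℝ) ≤ 3 ^ m := by exact_mod_cast hL2
    have hs0 : 0 ≤ ∑ k ∈ Finset.range L, g (x + (k : ℤ) • stdBasis d i) :=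
      Finset.sum_nonneg fun k _ => g0 _
    have := mul_le_mul hL3 hs hs0 (by positivity)
    simp only [hg] at this hp ⊢
    nlinarith
  -- For fixed `k` the shift by `k e_i` is injective: each bond is counted at most once.
  have hcount : ∀ k : ℕ, ∑ x ∈ cubeMinus d m,
      (if x + (k : ℤ) • stdBasis d i ∈ cube d m then g (x + (k : ℤ) • stdBasis d i) else 0) ≤
      ∑ x ∈ cube d m, g x := by
    intro k
    rw [← Finset.sum_filter]
    rw [← Finset.sum_image (s := (cubeMinus d m).filter fun x =>
      x + (k : ℤ) • stdBasis d i ∈ cube d m) (g := fun x => x + (k : ℤ) • stdBasis d i) (f := g)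
      (fun a _ b _ h => add_right_cancel h)]
    refine Finset.sum_le_sum_of_subset_of_nonneg ?_ fun x _ _ => g0 x
    intro z hz
    obtain ⟨x, hx, rfl⟩ := Finset.mem_image.1 hz
    exact (Finset.mem_filter.1 hx).2
  calc ∫ η, F η ^ 2 ∂P ≤ ∑ x ∈ cubeMinus d m, ρ * (1 - ρ) * ∫ η, siteDiff x F η ^ 2 ∂P := by
        simpa using hES
    _ ≤ _ := Finset.sum_le_sum hsite
    _ = 2 * 3 ^ m * ∑ k ∈ Finset.range (3 ^ m), ∑ x ∈ cubeMinus d m,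
        (if x + (k : ℤ) • stdBasis d i ∈ cube d m then
          g (x + (k : ℤ) • stdBasis d i) else 0) := by
        rw [← Finset.mul_sum, Finset.sum_comm]
    _ ≤ 2 * 3 ^ m * ∑ k ∈ Finset.range (3 ^ m), ∑ x ∈ cube d m, g x := by
        gcongr with k hk
        exact hcount k
    _ = _ := by
        simp
        ring

/-! ### The energy of the affine function -/

/-- Exchanging `x` and `y` changes the affine function by `(x_i - y_i)(η_y - η_x)`. -/
lemma kawasaki_affine (i : Fin d) (Λ : Finset (Zd d)) {x y : Zd d} (hx : x ∈ Λ) (hy : y ∈ Λ)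
    (hxy : x ≠ y) (η : Config d) :
    kawasaki x y (affine d i Λ) η = ((x i : ℝ) - y i) *
      kawasaki x y (fun η => if η x then (1 : ℝ) else 0) η := by
  simp only [kawasaki, affine]
  rw [← Finset.sum_sub_distrib, ← Finset.sum_subset (s₁ := {x, y})]
  · rw [Finset.sum_pair hxy]
    simp only [exchange, hxy.symm, if_true, if_false]
    ring
  · intro z hz
    rcases Finset.mem_insert.1 hz with rfl | hz
    · exact hx
    · rwa [Finset.mem_singleton.1 hz]
  · intro z _ hz
    simp only [Finset.mem_insert, Finset.mem_singleton, not_or] at hz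
    simp [exchange, hz.1, hz.2]

lemma integral_kawasaki_affine {ρ : ℝ} (hρ : ρ ∈ Set.Ioo (0 : ℝ) 1) {P : Measure (Config d)}
    (hP : IsBernoulliProduct ρ P) (m : ℕ) (i j : Fin d) {x : Zd d} (hx : x ∈ cube d m) :
    ∫ η, kawasaki x (x + stdBasis d j) (affine d i (cubePlus d m)) η ^ 2 ∂P =
      if j = i then 2 * (ρ * (1 - ρ)) else 0 := by
  have := hP.1
  have hne : x ≠ x + stdBasis d j := by
    intro h
    have := congrFun h j
    simp [stdBasis] at this
  have hxp : x ∈ cubePlus d m := Finset.mem_union_left _ hx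
  have hyp : x + stdBasis d j ∈ cubePlus d m :=
    Finset.mem_union_right _ (Finset.mem_biUnion.2
      ⟨j, Finset.mem_univ _, Finset.mem_image_of_mem _ hx⟩)
  have hloc : localOn (fun η : Config d => if η x then (1 : ℝ) else 0) {x} := by
    intro η η' h
    simp only [h x (by simp)]
  simp only [kawasaki_affine i _ hxp hyp hne, mul_pow]
  rw [integral_const_mul, integral_kawasaki_sq hρ hP hloc hne (by simpa using hne.symm)]
  split_ifs with h
  · subst h
    simp [siteDiff, stdBasis]
  · simp [stdBasis, Ne.symm h]

/-- The corrector has Dirichlet energy at most `8λχ|□_m|`: compare the minimizer with the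
affine function itself and use `1 ≤ c ≤ λ`. -/
lemma dirichlet_bound (r : ℕ) (lam : ℝ) (hlam : 1 ≤ lam)
    (c : Zd d → Fin d → Config d → ℝ) (hc : JumpRatesHyp d r lam c)
    (ρ : ℝ) (hρ : ρ ∈ Set.Ioo (0 : ℝ) 1)
    (P : Measure (Config d)) (hP : IsBernoulliProduct ρ P)
    (m : ℕ) (i : Fin d) (v : Config d → ℝ) (hvL : Loc v)
    (hle : energy d m ρ P c v ≤ energy d m ρ P c (affine d i (cubePlus d m))) :
    ∑ x ∈ cube d m, ∑ j : Fin d, ∫ η, kawasaki x (x + stdBasis d j)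
      (fun η => v η - affine d i (cubePlus d m) η) η ^ 2 ∂P ≤
      8 * lam * (ρ * (1 - ρ)) * 3 ^ (d * m) := by
  have := hP.1
  obtain ⟨-, hcb, hcl, -, -⟩ := hc
  have hχ : 0 < ρ * (1 - ρ) := mul_pos hρ.1 (by linarith [hρ.2])
  have hA : Loc (affine d i (cubePlus d m)) := Loc.affine i _
  have hcL : ∀ x j, Loc (c x j) := fun x j => ⟨_, hcl x j⟩
  have hint : ∀ (w : Config d → ℝ), Loc w → ∀ x j,
      Integrable (fun η => (1 / 2) * c x j η * (kawasaki x (x + stdBasis d j) w η) ^ 2) P :=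
    fun w hw x j => ((hcL x j).map₂ (hw.kawasaki x (x + stdBasis d j))
      fun a b => (1 / 2) * a * b ^ 2).integrable P
  have hS : ∑ x ∈ cube d m, ∑ j : Fin d, ∫ η, kawasaki x (x + stdBasis d j)
      (affine d i (cubePlus d m)) η ^ 2 ∂P = 2 * (ρ * (1 - ρ)) * 3 ^ (d * m) := by
    rw [Finset.sum_congr rfl fun x hx => Finset.sum_congr rfl fun j _ =>
      integral_kawasaki_affine hρ hP m i j hx]
    simp [card_cube]
    ring
  have hpos : 0 < (2 * (ρ * (1 - ρ)) * ((cube d m).card : ℝ))⁻¹ := by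
    rw [card_cube]
    positivity
  have hle' := le_of_mul_le_mul_left hle hpos
  have hup : ∑ x ∈ cube d m, ∑ j : Fin d, ∫ η, (1 / 2) * c x j η *
      (kawasaki x (x + stdBasis d j) (affine d i (cubePlus d m)) η) ^ 2 ∂P ≤
      lam / 2 * (2 * (ρ * (1 - ρ)) * 3 ^ (d * m)) := by
    rw [← hS, Finset.mul_sum]
    refine Finset.sum_le_sum fun x _ => ?_
    rw [Finset.mul_sum]
    refine Finset.sum_le_sum fun j _ => ?_
    rw [← integral_const_mul]
    refine integral_mono (hint _ hA x j)
      ((((hA.kawasaki _ _).map (· ^ 2)).integrable P).const_mul _) fun η => ?_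
    have := mul_le_mul_of_nonneg_right (hcb x j η).2
      (sq_nonneg (kawasaki x (x + stdBasis d j) (affine d i (cubePlus d m)) η))
    simp only
    linarith
  have hmain : ∑ x ∈ cube d m, ∑ j : Fin d, ∫ η, kawasaki x (x + stdBasis d j)
      (fun η => v η - affine d i (cubePlus d m) η) η ^ 2 ∂P ≤
      4 * (∑ x ∈ cube d m, ∑ j : Fin d, ∫ η, (1 / 2) * c x j η *
        (kawasaki x (x + stdBasis d j) v η) ^ 2 ∂P) +
      2 * ∑ x ∈ cube d m, ∑ j : Fin d, ∫ η, kawasaki x (x + stdBasis d j)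
        (affine d i (cubePlus d m)) η ^ 2 ∂P := by
    simp only [Finset.mul_sum, ← Finset.sum_add_distrib]
    refine Finset.sum_le_sum fun x _ => Finset.sum_le_sum fun j _ => ?_
    have i1 := (hint _ hvL x j).const_mul 4
    have i2 := (((hA.kawasaki x (x + stdBasis d j)).map (· ^ 2)).integrable P).const_mul 2
    rw [← integral_const_mul, ← integral_const_mul, ← integral_add i1 i2]
    refine integral_mono ((((hvL.map₂ hA fun a b => a - b).kawasaki _ _).map
      (· ^ 2)).integrable P) (i1.add i2) fun η => ?_
    have := mul_le_mul_of_nonneg_right (hcb x j η).1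
      (sq_nonneg (kawasaki x (x + stdBasis d j) v η))
    have e : kawasaki x (x + stdBasis d j) (fun η => v η - affine d i (cubePlus d m) η) η =
        kawasaki x (x + stdBasis d j) v η -
          kawasaki x (x + stdBasis d j) (affine d i (cubePlus d m)) η := by
      simp only [kawasaki]
      ring
    simp only [e]
    nlinarith [sq_nonneg (kawasaki x (x + stdBasis d j) v η +
          kawasaki x (x + stdBasis d j) (affine d i (cubePlus d m)) η)]
  rw [hS] at hmain
  have h3 : (0 : ℝ) < ρ * (1 - ρ) * 3 ^ (d * m) := by positivity
  nlinarith [mul_le_mul_of_nonneg_right hlam h3.le]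

end

/-- `L²`-bound on the local corrector. If `v` minimizes the
finite-volume energy over `ℓ_{e_i,□_m^+} + F₀(□_m^-)` and `φ := v - ℓ_{e_i,□_m^+}` is
normalized to have mean zero, then `E_ρ[φ²] ≤ 16 λ χ(ρ) 3^{(d+2)m}`. -/
theorem stmt14 (d r : ℕ) (hd : 1 ≤ d) (hr : 1 ≤ r) (lam : ℝ) (hlam : 1 ≤ lam)
    (c : Zd d → Fin d → Config d → ℝ) (hc : JumpRatesHyp d r lam c)
    (ρ : ℝ) (hρ : ρ ∈ Set.Ioo (0 : ℝ) 1)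
    (P : Measure (Config d)) (hP : IsBernoulliProduct ρ P)
    (m : ℕ) (i : Fin d)
    (v : Config d → ℝ) (hvm : Measurable v)
    (hvloc : localOn (fun η => v η - affine d i (cubePlus d m) η) (cubeMinus d m))
    (hmin : ∀ w : Config d → ℝ, Measurable w →
        localOn (fun η => w η - affine d i (cubePlus d m) η) (cubeMinus d m) →
        energy d m ρ P c v ≤ energy d m ρ P c w)
    (hnorm : ∫ η, (v η - affine d i (cubePlus d m) η) ∂P = 0) :
    ∫ η, (v η - affine d i (cubePlus d m) η) ^ 2 ∂P
      ≤ 16 * lam * (ρ * (1 - ρ)) * (3 : ℝ) ^ ((d + 2) * m) := by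
  have := hP.1
  have hφL : Loc (fun η => v η - affine d i (cubePlus d m) η) := ⟨_, hvloc⟩
  have hvL : Loc v := by
    have h := hφL.map₂ (Loc.affine i (cubePlus d m)) fun a b => a + b
    simpa using h
  have hle := hmin (affine d i (cubePlus d m)) (Loc.affine i _).measurable
    (fun η η' _ => by simp)
  have hD := dirichlet_bound r lam hlam c hc ρ hρ P hP m i v hvL hle
  have hPo := poincare hρ hP m i hvloc hnorm
  have hdir : ∑ x ∈ cube d m, ∫ η, kawasaki x (x + stdBasis d i)
      (fun η => v η - affine d i (cubePlus d m) η) η ^ 2 ∂P ≤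
      8 * lam * (ρ * (1 - ρ)) * 3 ^ (d * m) := by
    refine le_trans (Finset.sum_le_sum fun x _ => ?_) hD
    exact Finset.single_le_sum (f := fun j => ∫ η, kawasaki x (x + stdBasis d j)
      (fun η => v η - affine d i (cubePlus d m) η) η ^ 2 ∂P)
      (fun j _ => integral_nonneg fun η => sq_nonneg _) (Finset.mem_univ i)
  refine hPo.trans ((mul_le_mul_of_nonneg_left hdir (by positivity)).trans (le_of_eq ?_))
  ring

end
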